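/- arXiv:2210.05128 — 2 statements merged into one kernel-verified Lean document; each statement's English description precedes it below -/
import Mathlib

section
/- Let A be a real m×n matrix (m ≥ 1) all of whose rows are nonzero, let x* ∈ ℝ^n with A x* = b, and let σ > 0 satisfy ‖A u‖₂ ≥ σ‖u‖₂ for all u in the range of Aᵀ. Let x ∈ ℝ^n satisfy x − x* ∈ range(Aᵀ) and b − Ax ≠ 0. Fix p ∈ [1,∞) and η ∈ (0,1], set ε = η · max_{1≤i≤m} |b^{(i)} − A^{(i)}x|^p / ‖A^{(i)}‖_p^p, τ = { i : |b^{(i)} − A^{(i)}x|^p ≥ ε‖A^{(i)}‖_p^p }, ξ = Σ_{i∈τ} (b^{(i)} − A^{(i)}x) e_i, and x' = x + (ξᵀ(b − Ax)/‖Aᵀξ‖₂²) Aᵀξ. Then ‖x' − x*‖₂² ≤ (1 − β σ²) ‖x − x*‖₂², where β = (η^{2/p} / Σ_{i=1}^m ‖A^{(i)}‖_p²) · (Σ_{i∈τ} ‖A^{(i)}‖_p²) / ‖A_τ‖², and ‖A_τ‖ is the ℓ²→ℓ² operator norm (largest singular value) of the row submatrix A_τ with rows indexed by τ. -/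
open Matrix Finset

/-- The ℓ²→ℓ² operator norm (largest singular value) of a real matrix. -/
noncomputable def sigmaMax {ι : Type} [Fintype ι] {n : ℕ}
    (M : Matrix ι (Fin n) ℝ) : ℝ :=
  ‖LinearMap.toContinuousLinearMap (Matrix.toEuclideanLin M)‖

/-- The row submatrix of `A` consisting of the rows indexed by `τ`. -/
def rowSubmatrix {m n : ℕ} (A : Matrix (Fin m) (Fin n) ℝ) (τ : Finset (Fin m)) :
    Matrix {i : Fin m // i ∈ τ} (Fin n) ℝ := fun i j => A i.1 j

/-- The restriction of `A *ᵥ v` to the rows in `τ` is bounded by `sigmaMax` of the submatrix. -/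
theorem sum_sq_mulVec_le_sigmaMax_rowSubmatrix {m n : ℕ} (A : Matrix (Fin m) (Fin n) ℝ)
    (τ : Finset (Fin m)) (v : Fin n → ℝ) :
    ∑ i ∈ τ, (A *ᵥ v) i ^ 2 ≤ sigmaMax (rowSubmatrix A τ) ^ 2 * ∑ j, v j ^ 2 := by
  have h := ContinuousLinearMap.le_opNorm
    (LinearMap.toContinuousLinearMap (Matrix.toEuclideanLin (rowSubmatrix A τ)))
    (WithLp.toLp 2 v)
  have h2 := pow_le_pow_left₀ (norm_nonneg _) h 2
  rw [mul_pow, EuclideanSpace.norm_sq_eq, EuclideanSpace.norm_sq_eq] at h2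
  simp only [Real.norm_eq_abs, sq_abs] at h2
  rw [← Finset.sum_coe_sort τ (fun i => (A *ᵥ v) i ^ 2)]
  exact h2

/-- A transposed row submatrix has the same norm bound: `‖Aᵀ ξ‖² ≤ ‖A_τ‖² ‖ξ‖²` for `ξ`
supported in `τ`. -/
theorem sum_sq_transpose_mulVec_le {m n : ℕ} (A : Matrix (Fin m) (Fin n) ℝ)
    (τ : Finset (Fin m)) (ξ : Fin m → ℝ) (hξ : ∀ i ∉ τ, ξ i = 0) :
    ∑ j, (Aᵀ *ᵥ ξ) j ^ 2 ≤ sigmaMax (rowSubmatrix A τ) ^ 2 * ∑ i ∈ τ, ξ i ^ 2 := by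
  set g := Aᵀ *ᵥ ξ with hg
  set G := ∑ j, g j ^ 2 with hG
  have hGeq : G = ∑ i ∈ τ, ξ i * (A *ᵥ g) i := by
    have h : g ⬝ᵥ g = ξ ⬝ᵥ (A *ᵥ g) := by
      rw [Matrix.dotProduct_mulVec ξ, ← Matrix.mulVec_transpose]
    rw [Finset.sum_subset (Finset.subset_univ τ) (by
      intro i _ hi
      rw [hξ i hi, zero_mul])]
    simpa [dotProduct, hG, sq] using h
  have hcs := Finset.sum_mul_sq_le_sq_mul_sq τ ξ (fun i => (A *ᵥ g) i)
  rw [← hGeq] at hcs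
  have hop := sum_sq_mulVec_le_sigmaMax_rowSubmatrix A τ g
  have hS : 0 ≤ ∑ i ∈ τ, ξ i ^ 2 := Finset.sum_nonneg fun i _ => sq_nonneg _
  have hG0 : 0 ≤ G := Finset.sum_nonneg fun i _ => sq_nonneg _
  rcases hG0.eq_or_lt with h0 | hpos
  · rw [← h0]
    positivity
  · refine le_of_mul_le_mul_right ?_ hpos
    calc G * G = G ^ 2 := (sq G).symm
      _ ≤ _ := hcs
      _ ≤ _ := mul_le_mul_of_nonneg_left hop hS
      _ = _ := by ring

/-- Squared distance after adding the multiple `S / ‖g‖²` of `g` to `e`, where `⟨g, e⟩ = -S`. -/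
theorem sum_sq_add_div_mul {ι : Type*} [Fintype ι] (e g : ι → ℝ) (S : ℝ)
    (hS : ∑ j, g j * e j = -S) (hg : ∑ j, g j ^ 2 ≠ 0) :
    ∑ j, (e j + S / (∑ k, g k ^ 2) * g j) ^ 2 = ∑ j, e j ^ 2 - S ^ 2 / ∑ k, g k ^ 2 := by
  set G := ∑ k, g k ^ 2 with hG
  have h : ∀ j, (e j + S / G * g j) ^ 2
      = e j ^ 2 + 2 * (S / G) * (g j * e j) + (S / G) ^ 2 * g j ^ 2 := fun j => by ring
  simp_rw [h]
  rw [Finset.sum_add_distrib, Finset.sum_add_distrib, ← Finset.mul_sum, ← Finset.mul_sum, hS,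
    ← hG]
  field_simp
  ring

theorem sq_le_rpow_two_div_mul {p r k w : ℝ} (hp : 0 < p) (hk : 0 ≤ k) (hw : 0 ≤ w)
    (h : |r| ^ p ≤ k * w) : r ^ 2 ≤ k ^ (2 / p) * w ^ (2 / p) := by
  have h2 := Real.rpow_le_rpow (by positivity) h (by positivity : 0 ≤ 2 / p)
  rwa [← Real.rpow_mul (abs_nonneg r), mul_div_cancel₀ _ hp.ne', Real.rpow_two, sq_abs,
    Real.mul_rpow hk hw] at h2

theorem rpow_two_div_mul_le_sq {p r k w : ℝ} (hp : 0 < p) (hk : 0 ≤ k) (hw : 0 ≤ w)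
    (h : k * w ≤ |r| ^ p) : k ^ (2 / p) * w ^ (2 / p) ≤ r ^ 2 := by
  have h2 := Real.rpow_le_rpow (by positivity) h (by positivity : 0 ≤ 2 / p)
  rwa [← Real.rpow_mul (abs_nonneg r), mul_div_cancel₀ _ hp.ne', Real.rpow_two, sq_abs,
    Real.mul_rpow hk hw] at h2

/-- Per-iteration error contraction of the fast greedy block Kaczmarz method
(unconditional variant of Theorem 2.1, with the full row-norm sum
`Σ_{i=1}^m ‖A⁽ⁱ⁾‖_p²` in the contraction factor):
`‖x' − x*‖₂² ≤ (1 − β σ²)‖x − x*‖₂²`. -/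
theorem fgbk_contraction_full {m n : ℕ} (hm : 0 < m)
    (A : Matrix (Fin m) (Fin n) ℝ) (hA : ∀ i, A i ≠ 0)
    (b : Fin m → ℝ) (xs : Fin n → ℝ) (hxs : A.mulVec xs = b)
    (σ : ℝ) (hσ0 : 0 < σ)
    (hσ : ∀ u : Fin n → ℝ, (∃ y : Fin m → ℝ, u = A.transpose.mulVec y) →
      σ * Real.sqrt (∑ j, (u j) ^ 2) ≤ Real.sqrt (∑ i, (A.mulVec u i) ^ 2))
    (x : Fin n → ℝ) (hx : ∃ y : Fin m → ℝ, x - xs = A.transpose.mulVec y)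
    (hres : b - A.mulVec x ≠ 0)
    (p : ℝ) (hp : 1 ≤ p) (η : ℝ) (hη0 : 0 < η) (hη1 : η ≤ 1)
    (ε : ℝ)
    (hε : ε = η * Finset.univ.sup' ⟨⟨0, hm⟩, Finset.mem_univ _⟩
      (fun i => |b i - A.mulVec x i| ^ p / ∑ j, |A i j| ^ p))
    (τ : Finset (Fin m))
    (hτ : ∀ i, i ∈ τ ↔ |b i - A.mulVec x i| ^ p ≥ ε * ∑ j, |A i j| ^ p)
    (ξ : Fin m → ℝ)
    (hξ : ξ = ∑ i ∈ τ, (b i - A.mulVec x i) • (Pi.single i 1 : Fin m → ℝ))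
    (x' : Fin n → ℝ)
    (hx' : x' = x + ((ξ ⬝ᵥ (b - A.mulVec x)) / ∑ j, (A.transpose.mulVec ξ j) ^ 2) •
      A.transpose.mulVec ξ)
    (β : ℝ)
    (hβ : β = η ^ (2 / p) / (∑ i, (∑ j, |A i j| ^ p) ^ (2 / p)) *
      ((∑ i ∈ τ, (∑ j, |A i j| ^ p) ^ (2 / p)) / (sigmaMax (rowSubmatrix A τ)) ^ 2)) :
    ∑ j, (x' j - xs j) ^ 2 ≤ (1 - β * σ ^ 2) * ∑ j, (x j - xs j) ^ 2 := by
  have hp0 : 0 < p := by linarith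
  set r : Fin m → ℝ := b - A *ᵥ x with hr
  have hri : ∀ i, b i - (A *ᵥ x) i = r i := fun i => rfl
  simp only [hri] at hε hτ hξ
  set w : Fin m → ℝ := fun i => ∑ j, |A i j| ^ p with hw
  have hw0 : ∀ i, 0 < w i := fun i => by
    obtain ⟨j, hj⟩ := Function.ne_iff.mp (hA i)
    exact Finset.sum_pos' (fun j _ => by positivity)
      ⟨j, Finset.mem_univ j, Real.rpow_pos_of_pos (abs_pos.mpr hj) p⟩
  obtain ⟨i₀, -, hi₀⟩ := Finset.exists_mem_eq_sup' (s := Finset.univ) ⟨⟨0, hm⟩, Finset.mem_univ _⟩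
    (fun i => |r i| ^ p / w i)
  have hmax : ∀ i, |r i| ^ p / w i ≤ |r i₀| ^ p / w i₀ := fun i =>
    hi₀ ▸ Finset.le_sup' (fun i => |r i| ^ p / w i) (Finset.mem_univ i)
  have hε' : ε = η * (|r i₀| ^ p / w i₀) := hε.trans (congrArg (η * ·) hi₀)
  set k := |r i₀| ^ p / w i₀ with hk
  have hk0 : 0 < k := by
    obtain ⟨i, hi⟩ := Function.ne_iff.mp hres
    exact (div_pos (Real.rpow_pos_of_pos (abs_pos.mpr hi) p) (hw0 i)).trans_le (hmax i)
  have hi₀τ : i₀ ∈ τ := by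
    have h : k * w i₀ = |r i₀| ^ p := div_mul_cancel₀ _ (hw0 i₀).ne'
    rw [hτ, ge_iff_le, hε', ← h, mul_assoc]
    exact mul_le_of_le_one_left (mul_pos hk0 (hw0 i₀)).le hη1
  have hr₀ : r i₀ ≠ 0 := by
    intro h
    rw [hk, h, abs_zero, Real.zero_rpow hp0.ne', zero_div] at hk0
    exact hk0.false
  have hξi : ∀ i, ξ i = if i ∈ τ then r i else 0 := fun i => by
    rw [hξ]
    simp [Finset.sum_apply, Pi.single_apply]
  set S := ∑ i ∈ τ, r i ^ 2 with hS
  have hS0 : 0 < S := Finset.sum_pos' (fun i _ => sq_nonneg _) ⟨i₀, hi₀τ, by positivity⟩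
  have hξr : ξ ⬝ᵥ r = S := by
    simp [dotProduct, hξi, hS, sq]
  have hξξ : ∑ i ∈ τ, ξ i ^ 2 = S :=
    Finset.sum_congr rfl fun i hi => by rw [hξi, if_pos hi]
  set g := Aᵀ *ᵥ ξ with hg
  set e := x - xs with he
  have hAe : A *ᵥ e = -r := by
    rw [he, Matrix.mulVec_sub, hxs, hr, neg_sub]
  have hge : ∑ j, g j * e j = -S := by
    change g ⬝ᵥ e = -S
    rw [hg, Matrix.mulVec_transpose, ← Matrix.dotProduct_mulVec, hAe, dotProduct_neg, hξr]
  have hGle := sum_sq_transpose_mulVec_le A τ ξ fun i hi => by rw [hξi, if_neg hi]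
  rw [hξξ, ← hg] at hGle
  have hG0 : 0 < ∑ j, g j ^ 2 := by
    refine (Finset.sum_nonneg fun j _ => sq_nonneg (g j)).lt_of_ne' fun h => ?_
    have hgz : ∀ j, g j = 0 := fun j => by
      have := (Finset.sum_eq_zero_iff_of_nonneg fun j _ => sq_nonneg (g j)).mp h j
        (Finset.mem_univ j)
      exact pow_eq_zero_iff two_ne_zero |>.mp this
    simp only [hgz, zero_mul, Finset.sum_const_zero] at hge
    linarith
  set M := sigmaMax (rowSubmatrix A τ) with hM
  have hM0 : 0 < M ^ 2 := pos_of_mul_pos_left (hG0.trans_le hGle) hS0.le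
  have hstep : ∑ j, (x' j - xs j) ^ 2 = ∑ j, e j ^ 2 - S ^ 2 / ∑ j, g j ^ 2 := by
    rw [← sum_sq_add_div_mul e g S hge hG0.ne', hx', hξr]
    refine Finset.sum_congr rfl fun j _ => ?_
    simp only [he, Pi.add_apply, Pi.sub_apply, Pi.smul_apply, smul_eq_mul]
    ring
  have hgain : S / M ^ 2 ≤ S ^ 2 / ∑ j, g j ^ 2 := by
    rw [div_le_div_iff₀ hM0 hG0]
    nlinarith
  have hσe : σ ^ 2 * ∑ j, e j ^ 2 ≤ ∑ i, r i ^ 2 := by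
    have h := pow_le_pow_left₀ (by positivity) (hσ e hx) 2
    rw [mul_pow, Real.sq_sqrt (by positivity), Real.sq_sqrt (by positivity), hAe] at h
    simpa using h
  set N := ∑ i, w i ^ (2 / p) with hN
  set Nτ := ∑ i ∈ τ, w i ^ (2 / p) with hNτ
  have hrN : ∑ i, r i ^ 2 ≤ k ^ (2 / p) * N := by
    rw [hN, Finset.mul_sum]
    exact Finset.sum_le_sum fun i _ => sq_le_rpow_two_div_mul hp0 hk0.le (hw0 i).le
      ((div_le_iff₀ (hw0 i)).mp (hmax i))
  have hSN : η ^ (2 / p) * k ^ (2 / p) * Nτ ≤ S := by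
    rw [← Real.mul_rpow hη0.le hk0.le, hNτ, Finset.mul_sum]
    exact Finset.sum_le_sum fun i hi => rpow_two_div_mul_le_sq hp0 (by positivity) (hw0 i).le
      (hε' ▸ (hτ i).mp hi)
  have hN0 : 0 < N := Finset.sum_pos (fun i _ => Real.rpow_pos_of_pos (hw0 i) _)
    ⟨i₀, Finset.mem_univ _⟩
  have hNτ0 : 0 ≤ Nτ := Finset.sum_nonneg fun i _ => Real.rpow_nonneg (hw0 i).le _
  have hβ0 : 0 ≤ β := by
    rw [hβ]
    positivity
  have hloss : β * (σ ^ 2 * ∑ j, e j ^ 2) ≤ S / M ^ 2 :=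
    calc β * (σ ^ 2 * ∑ j, e j ^ 2) ≤ β * (k ^ (2 / p) * N) :=
          mul_le_mul_of_nonneg_left (hσe.trans hrN) hβ0
      _ = η ^ (2 / p) * k ^ (2 / p) * Nτ / M ^ 2 := by
          rw [hβ]
          field_simp
      _ ≤ S / M ^ 2 := div_le_div_of_nonneg_right hSN hM0.le
  have hex : ∑ j, (x j - xs j) ^ 2 = ∑ j, e j ^ 2 := rfl
  rw [hstep, hex]
  linarith
end

section
/- Let A be a real m×n matrix (m ≥ 1) all of whose rows are nonzero, let x* ∈ ℝ^n with A x* = b, and let σ > 0 satisfy ‖A u‖₂ ≥ σ‖u‖₂ for all u in the range of Aᵀ. Let x ∈ ℝ^n satisfy x − x* ∈ range(Aᵀ) and b − Ax ≠ 0, and let S ⊆ {1,…,m} satisfy b^{(i)} − A^{(i)}x = 0 for all i ∈ S. Fix p ∈ [1,∞) and η ∈ (0,1], set ε = η · max_{1≤i≤m} |b^{(i)} − A^{(i)}x|^p / ‖A^{(i)}‖_p^p, τ = { i : |b^{(i)} − A^{(i)}x|^p ≥ ε‖A^{(i)}‖_p^p }, and ξ = Σ_{i∈τ} (b^{(i)}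 − A^{(i)}x) e_i. Then Aᵀξ ≠ 0 and (ξᵀ(b − Ax))² / ‖Aᵀξ‖₂² ≥ β σ² ‖x − x*‖₂², where β = (η^{2/p} / Σ_{i∈{1,…,m}∖S} ‖A^{(i)}‖_p²) · (Σ_{i∈τ} ‖A^{(i)}‖_p²) / ‖A_τ‖², and ‖A_τ‖ is the ℓ²→ℓ² operator norm (largest singular value) of the row submatrix A_τ with rows indexed by τ. -/
open Matrix Finset

/-- The rows of `A` indexed by `τ` stretch the Euclidean norm by at most `sigmaMax`. -/
lemma sum_mulVec_sq_le_sigmaMax {m n : ℕ} (A : Matrix (Fin m) (Fin n) ℝ) (τ : Finset (Fin m))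
    (u : Fin n → ℝ) :
    ∑ i ∈ τ, (A.mulVec u i) ^ 2 ≤ sigmaMax (rowSubmatrix A τ) ^ 2 * ∑ j, (u j) ^ 2 := by
  have h := (LinearMap.toContinuousLinearMap
    (Matrix.toEuclideanLin (rowSubmatrix A τ))).le_opNorm (WithLp.toLp 2 u)
  have h2 := pow_le_pow_left₀ (norm_nonneg _) h 2
  rw [mul_pow, EuclideanSpace.norm_sq_eq, EuclideanSpace.norm_sq_eq] at h2
  simp only [Real.norm_eq_abs, sq_abs] at h2
  rw [← Finset.sum_coe_sort τ (fun i => (A.mulVec u i) ^ 2)]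
  exact h2

/-- A combination `Aᵀξ` of the rows indexed by `τ` has norm at most `sigmaMax` times the norm
of the coefficients. -/
lemma sum_transpose_mulVec_sq_le_sigmaMax {m n : ℕ} (A : Matrix (Fin m) (Fin n) ℝ)
    (τ : Finset (Fin m)) (ξ : Fin m → ℝ) (hξ : ∀ i ∉ τ, ξ i = 0) :
    ∑ j, (A.transpose.mulVec ξ j) ^ 2 ≤
      sigmaMax (rowSubmatrix A τ) ^ 2 * ∑ i ∈ τ, (ξ i) ^ 2 := by
  set v := A.transpose.mulVec ξ with hv
  have hV : ∑ j, (v j) ^ 2 = ∑ i ∈ τ, ξ i * A.mulVec v i := by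
    have h : v ⬝ᵥ v = ξ ⬝ᵥ A.mulVec v := by
      rw [Matrix.dotProduct_mulVec ξ, ← Matrix.mulVec_transpose]
    rw [Finset.sum_subset (Finset.subset_univ τ) (fun i _ hi => by rw [hξ i hi, zero_mul])]
    simpa [dotProduct, sq] using h
  have hCS := Finset.sum_mul_sq_le_sq_mul_sq τ ξ (A.mulVec v)
  have hop := sum_mulVec_sq_le_sigmaMax A τ v
  rw [← hV] at hCS
  have hR : 0 ≤ ∑ i ∈ τ, (ξ i) ^ 2 := Finset.sum_nonneg fun i _ => sq_nonneg _
  rcases (Finset.sum_nonneg fun j _ => sq_nonneg (v j) : 0 ≤ ∑ j, (v j) ^ 2).eq_or_lt with h0 | h0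
  · rw [← h0]
    positivity
  · refine le_of_mul_le_mul_right ?_ h0
    calc (∑ j, (v j) ^ 2) * ∑ j, (v j) ^ 2 = (∑ j, (v j) ^ 2) ^ 2 := (sq _).symm
      _ ≤ _ := hCS
      _ ≤ _ := mul_le_mul_of_nonneg_left hop hR
      _ = _ := by ring

/-- Squaring as a power of the `p`-th power. -/
lemma abs_rpow_rpow_two_div {p : ℝ} (hp : 0 < p) (a : ℝ) : (|a| ^ p) ^ (2 / p) = a ^ 2 := by
  rw [← Real.rpow_mul (abs_nonneg a), mul_div_cancel₀ _ hp.ne', Real.rpow_two, sq_abs]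

/-- Combined key lower bound (2.14) on the per-step projection magnitude used
in the proof of Theorem 2.1: `Aᵀξ ≠ 0` and
`(ξᵀ(b − Ax))² / ‖Aᵀξ‖₂² ≥ β σ² ‖x − x*‖₂²` with
`β = (η^{2/p} / Σ_{i∉S} ‖A⁽ⁱ⁾‖_p²) · (Σ_{i∈τ} ‖A⁽ⁱ⁾‖_p²) / ‖A_τ‖²`. -/
theorem fgbk_key_lower_bound {m n : ℕ} (hm : 0 < m)
    (A : Matrix (Fin m) (Fin n) ℝ) (hA : ∀ i, A i ≠ 0)
    (b : Fin m → ℝ) (xs : Fin n → ℝ) (hxs : A.mulVec xs = b)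
    (σ : ℝ) (hσ0 : 0 < σ)
    (hσ : ∀ u : Fin n → ℝ, (∃ y : Fin m → ℝ, u = A.transpose.mulVec y) →
      σ * Real.sqrt (∑ j, (u j) ^ 2) ≤ Real.sqrt (∑ i, (A.mulVec u i) ^ 2))
    (x : Fin n → ℝ) (hx : ∃ y : Fin m → ℝ, x - xs = A.transpose.mulVec y)
    (hres : b - A.mulVec x ≠ 0)
    (S : Finset (Fin m)) (hS : ∀ i ∈ S, b i - A.mulVec x i = 0)
    (p : ℝ) (hp : 1 ≤ p) (η : ℝ) (hη0 : 0 < η) (hη1 : η ≤ 1)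
    (ε : ℝ)
    (hε : ε = η * Finset.univ.sup' ⟨⟨0, hm⟩, Finset.mem_univ _⟩
      (fun i => |b i - A.mulVec x i| ^ p / ∑ j, |A i j| ^ p))
    (τ : Finset (Fin m))
    (hτ : ∀ i, i ∈ τ ↔ |b i - A.mulVec x i| ^ p ≥ ε * ∑ j, |A i j| ^ p)
    (ξ : Fin m → ℝ)
    (hξ : ξ = ∑ i ∈ τ, (b i - A.mulVec x i) • (Pi.single i 1 : Fin m → ℝ))
    (β : ℝ)
    (hβ : β = η ^ (2 / p) / (∑ i ∈ Sᶜ, (∑ j, |A i j| ^ p) ^ (2 / p)) *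
      ((∑ i ∈ τ, (∑ j, |A i j| ^ p) ^ (2 / p)) / (sigmaMax (rowSubmatrix A τ)) ^ 2)) :
    A.transpose.mulVec ξ ≠ 0 ∧
      (ξ ⬝ᵥ (b - A.mulVec x)) ^ 2 / (∑ j, (A.transpose.mulVec ξ j) ^ 2) ≥
        β * σ ^ 2 * ∑ j, (x j - xs j) ^ 2 := by
  have hp0 : 0 < p := by linarith
  have hq0 : 0 ≤ 2 / p := by positivity
  set r : Fin m → ℝ := b - A.mulVec x
  have hri : ∀ i, b i - A.mulVec x i = r i := fun i => rfl
  simp only [hri] at hS hε hτ hξ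
  set w : Fin m → ℝ := fun i => ∑ j, |A i j| ^ p
  have hwi : ∀ i, ∑ j, |A i j| ^ p = w i := fun i => rfl
  simp only [hwi] at hε hτ hβ
  have hw0 : ∀ i, 0 < w i := fun i => by
    obtain ⟨j, hj⟩ := Function.ne_iff.mp (hA i)
    exact Finset.sum_pos' (fun j _ => Real.rpow_nonneg (abs_nonneg _) p)
      ⟨j, Finset.mem_univ j, Real.rpow_pos_of_pos (abs_pos.mpr hj) p⟩
  set M := Finset.univ.sup' ⟨⟨0, hm⟩, Finset.mem_univ _⟩ (fun i => |r i| ^ p / w i) with hM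
  have hleM : ∀ i, |r i| ^ p / w i ≤ M := fun i =>
    Finset.le_sup' (fun i => |r i| ^ p / w i) (Finset.mem_univ i)
  obtain ⟨i₀, hi₀⟩ := Function.ne_iff.mp hres
  have hM0 : 0 < M := lt_of_lt_of_le
    (div_pos (Real.rpow_pos_of_pos (abs_pos.mpr hi₀) p) (hw0 i₀)) (hleM i₀)
  obtain ⟨k, -, hk⟩ := Finset.exists_mem_eq_sup' (s := Finset.univ)
    ⟨⟨0, hm⟩, Finset.mem_univ _⟩ (fun i => |r i| ^ p / w i)
  rw [← hM] at hk
  have hkM : |r k| ^ p = M * w k := by rw [hk, div_mul_cancel₀ _ (hw0 k).ne']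
  have hkτ : k ∈ τ := by
    rw [hτ, hkM, hε, ge_iff_le]
    exact mul_le_mul_of_nonneg_right (mul_le_of_le_one_left hM0.le hη1) (hw0 k).le
  have hrk : r k ≠ 0 := fun h => by
    rw [h, abs_zero, Real.zero_rpow hp0.ne'] at hkM
    exact (mul_pos hM0 (hw0 k)).ne hkM
  have hξi : ∀ i, ξ i = if i ∈ τ then r i else 0 := fun i => by
    rw [hξ, Finset.sum_apply]
    simp [Pi.single_apply]
  set R := ∑ i ∈ τ, (r i) ^ 2 with hR
  have hR0 : 0 < R := Finset.sum_pos' (fun i _ => sq_nonneg _) ⟨k, hkτ, by positivity⟩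
  have hξr : ξ ⬝ᵥ r = R := by
    simp [dotProduct, hξi, hR, sq]
  have hξR : ∑ i ∈ τ, (ξ i) ^ 2 = R :=
    Finset.sum_congr rfl fun i hi => by rw [hξi, if_pos hi]
  have hrA : r = A.mulVec (xs - x) := by rw [Matrix.mulVec_sub, hxs]
  have hne : A.transpose.mulVec ξ ≠ 0 := fun h => by
    rw [hrA, Matrix.dotProduct_mulVec, ← Matrix.mulVec_transpose, h, zero_dotProduct] at hξr
    exact hR0.ne hξr
  refine ⟨hne, ?_⟩
  have hV := sum_transpose_mulVec_sq_le_sigmaMax A τ ξ fun i hi => by rw [hξi, if_neg hi]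
  rw [hξR] at hV
  rw [hξr]
  set V := ∑ j, (A.transpose.mulVec ξ j) ^ 2
  set s := sigmaMax (rowSubmatrix A τ)
  have hV0 : 0 < V := by
    obtain ⟨j, hj⟩ := Function.ne_iff.mp hne
    exact Finset.sum_pos' (fun j _ => sq_nonneg _)
      ⟨j, Finset.mem_univ j, pow_pos (abs_pos.mpr hj) 2 |>.trans_eq (sq_abs _)⟩
  have hs0 : 0 < s ^ 2 := pos_of_mul_pos_left (hV0.trans_le hV) hR0.le
  have hlower : η ^ (2 / p) * M ^ (2 / p) * ∑ i ∈ τ, w i ^ (2 / p) ≤ R := by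
    rw [Finset.mul_sum]
    refine Finset.sum_le_sum fun i hi => ?_
    rw [← abs_rpow_rpow_two_div hp0 (r i), ← Real.mul_rpow hη0.le hM0.le,
      ← Real.mul_rpow (by positivity) (hw0 i).le, ← hε]
    refine Real.rpow_le_rpow ?_ ((hτ i).mp hi) hq0
    rw [hε]
    exact (mul_pos (mul_pos hη0 hM0) (hw0 i)).le
  have hupper : σ ^ 2 * ∑ j, (x j - xs j) ^ 2 ≤ M ^ (2 / p) * ∑ i ∈ Sᶜ, w i ^ (2 / p) := by
    have h := pow_le_pow_left₀ (by positivity) (hσ (x - xs) hx) 2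
    rw [mul_pow, Real.sq_sqrt (by positivity), Real.sq_sqrt (by positivity)] at h
    refine h.trans ?_
    have hneg : A.mulVec (x - xs) = -r := by rw [hrA, ← Matrix.mulVec_neg, neg_sub]
    simp only [hneg, Pi.neg_apply, neg_sq]
    rw [← Finset.sum_subset (Finset.subset_univ Sᶜ)
      (fun i _ hi => by rw [hS i (by simpa using hi)]; norm_num), Finset.mul_sum]
    refine Finset.sum_le_sum fun i _ => ?_
    rw [← abs_rpow_rpow_two_div hp0 (r i), ← Real.mul_rpow hM0.le (hw0 i).le]
    exact Real.rpow_le_rpow (by positivity) ((div_le_iff₀ (hw0 i)).mp (hleM i)) hq0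
  have hWS : 0 ≤ ∑ i ∈ Sᶜ, w i ^ (2 / p) :=
    Finset.sum_nonneg fun i _ => Real.rpow_nonneg (hw0 i).le _
  have hWτ : 0 ≤ ∑ i ∈ τ, w i ^ (2 / p) :=
    Finset.sum_nonneg fun i _ => Real.rpow_nonneg (hw0 i).le _
  have hratio := div_le_of_le_mul₀ hWS (Real.rpow_nonneg hM0.le _) hupper
  calc β * σ ^ 2 * ∑ j, (x j - xs j) ^ 2
      = (η ^ (2 / p) * ((∑ i ∈ τ, w i ^ (2 / p)) / s ^ 2)) *
          (σ ^ 2 * (∑ j, (x j - xs j) ^ 2) / ∑ i ∈ Sᶜ, w i ^ (2 / p)) := by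
        rw [hβ]; ring
    _ ≤ (η ^ (2 / p) * ((∑ i ∈ τ, w i ^ (2 / p)) / s ^ 2)) * M ^ (2 / p) :=
        mul_le_mul_of_nonneg_left hratio (by positivity)
    _ = (η ^ (2 / p) * M ^ (2 / p) * ∑ i ∈ τ, w i ^ (2 / p)) / s ^ 2 := by ring
    _ ≤ R / s ^ 2 := by gcongr
    _ ≤ R ^ 2 / V := by
        rw [div_le_div_iff₀ hs0 hV0]
        calc R * V ≤ R * (s ^ 2 * R) := by gcongr
          _ = R ^ 2 * s ^ 2 := by ring
end
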